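/- Let P be a pregroup and let v = x_1⋯x_n ∈ X* be cyclically P-reduced. If w = y_1⋯y_n ≈^c v, then w is cyclically P-reduced. Furthermore, ≈^c is an equivalence relation on the set of all cyclically P-reduced words over X. -/

import Mathlib

/-!
The word is read as a periodic sequence `x : ℕ → P`, so that cyclic reducedness becomes
`(x i, x (i + 1)) ∉ D` for all `i`, and a cyclic interleave becomes a periodic sequence `s` with
`y i = (s i)^σ · x i · s (i + 1)` (`cycPReduced_iff`, `cycInterleave_iff`). All arguments are then
local and only involve a letter and its neighbours; length two needs no separate treatment.

* Reducedness: moving a single `s` across a gap, `(a, b) ↦ (a s, s^σ b)`, neither creates a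
  product inside the pair (`D_shift`) nor with the outer neighbours (`not_D_mul_right`,
  `not_D_mul_left`, both by (P5)). Doing this at three consecutive gaps gives
  `not_D_of_twist`.
* Symmetry: replace `s` by `s^σ`; no reducedness is needed (`IsTwist.symm`).
* Transitivity: if `s` and `s'` are the two multiplier sequences, then reducedness of the middle
  word and (P5) force `(s i, s' i) ∈ D` (`D_of_not_D`) and make all one-sided multiplications of
  a letter compatible (`D_mul_of_not_D`), so that `s i · s' i` works (`IsTwist.trans`).
-/

/-- A pregroup in the sense of Stallings: a set `P` with a distinguished element `one`,
a partial multiplication, defined for pairs in `D` and modelled here as a total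
function `mul` whose values are only meaningful on pairs in `D`, and an involution
`inv` (written `x ↦ x^σ` in the literature), satisfying Stallings' axioms (P1)–(P5). -/
structure Pregroup (P : Type*) where
  one : P
  D : P → P → Prop
  mul : P → P → P
  inv : P → P
  /-- `σ` is an involution. -/
  inv_inv : ∀ x, inv (inv x) = x
  /-- (P1) -/
  D_one_left : ∀ x, D one x
  D_one_right : ∀ x, D x one
  one_mul : ∀ x, mul one x = x
  mul_one : ∀ x, mul x one = x
  /-- (P2) -/
  D_mul_inv : ∀ x, D x (inv x)
  D_inv_mul : ∀ x, D (inv x) x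
  mul_inv : ∀ x, mul x (inv x) = one
  inv_mul : ∀ x, mul (inv x) x = one
  /-- (P3) -/
  D_inv : ∀ x y, D x y → D (inv y) (inv x)
  inv_mul_eq : ∀ x y, D x y → inv (mul x y) = mul (inv y) (inv x)
  /-- (P4) -/
  D_assoc : ∀ x y z, D x y → D y z → (D (mul x y) z ↔ D x (mul y z))
  mul_assoc : ∀ x y z, D x y → D y z → D (mul x y) z → mul (mul x y) z = mul x (mul y z)
  /-- (P5) -/
  five : ∀ x y z t, D x y → D y z → D z t → D (mul x y) z ∨ D (mul y z) t

namespace Pregroup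

variable {P : Type*}

/-- The `i`-th letter (0-based) of the word `w` over `P`. -/
def letter (pg : Pregroup P) (w : List P) (i : ℕ) : P :=
  w.getD i pg.one

/-- `w` is a word over `X = P \ {1}`. -/
def InX (pg : Pregroup P) (w : List P) : Prop :=
  ∀ p ∈ w, p ≠ pg.one

/-- `w` is `P`-reduced: no pair of consecutive letters lies in `D(P)`. -/
def PReduced (pg : Pregroup P) (w : List P) : Prop :=
  ∀ i, i + 1 < w.length → ¬ pg.D (pg.letter w i) (pg.letter w (i + 1))

/-- `w` is cyclically `P`-reduced. -/
def CycPReduced (pg : Pregroup P) (w : List P) : Prop :=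
  pg.PReduced w ∧ (1 < w.length → ¬ pg.D (pg.letter w (w.length - 1)) (pg.letter w 0))

end Pregroup

namespace Pregroup

variable {P : Type*}

/-- `w` is a cyclic interleave of `v` (the relation `v ≈ᶜ w`): either both words have
length at most 1 and are equal, or they have the same length `n > 1` and there exist
`s 0, s 1, …, s (n-1), s n = s 0` in `P` such that
`(s i^σ, v i), (v i, s (i+1)), ([s i ^σ * v i], s (i+1)) ∈ D(P)` and
`w i = [s i ^σ * v i * s (i+1)]` for all `i < n`. -/
def CycInterleave (pg : Pregroup P) (v w : List P) : Prop :=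
  w.length = v.length ∧
  ((v.length ≤ 1 ∧ w = v) ∨
    (1 < v.length ∧
      ∃ s : ℕ → P, s v.length = s 0 ∧
        ∀ i < v.length,
          pg.D (pg.inv (s i)) (pg.letter v i) ∧
          pg.D (pg.letter v i) (s (i + 1)) ∧
          pg.D (pg.mul (pg.inv (s i)) (pg.letter v i)) (s (i + 1)) ∧
          pg.letter w i = pg.mul (pg.mul (pg.inv (s i)) (pg.letter v i)) (s (i + 1))))

end Pregroup

namespace Pregroup

variable {P : Type*} (pg : Pregroup P)

/-! ### Cancellation -/

lemma inv_one : pg.inv pg.one = pg.one := by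
  rw [← pg.one_mul (pg.inv pg.one), pg.mul_inv]

variable {pg}

lemma D_cancel_right {x y : P} (h : pg.D x y) : pg.D (pg.mul x y) (pg.inv y) := by
  rw [pg.D_assoc _ _ _ h (pg.D_mul_inv y), pg.mul_inv]
  exact pg.D_one_right x

lemma mul_cancel_right {x y : P} (h : pg.D x y) : pg.mul (pg.mul x y) (pg.inv y) = x := by
  rw [pg.mul_assoc _ _ _ h (pg.D_mul_inv y) (D_cancel_right h), pg.mul_inv, pg.mul_one]

lemma D_cancel_left {x y : P} (h : pg.D x y) : pg.D (pg.inv x) (pg.mul x y) := by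
  rw [← pg.D_assoc _ _ _ (pg.D_inv_mul x) h, pg.inv_mul]
  exact pg.D_one_left y

lemma mul_cancel_left {x y : P} (h : pg.D x y) : pg.mul (pg.inv x) (pg.mul x y) = y := by
  have h1 : pg.D (pg.mul (pg.inv x) x) y := by rw [pg.inv_mul]; exact pg.D_one_left y
  rw [← pg.mul_assoc _ _ _ (pg.D_inv_mul x) h h1, pg.inv_mul, pg.one_mul]

lemma D_cancel_right' {x y : P} (h : pg.D x (pg.inv y)) : pg.D (pg.mul x (pg.inv y)) y := by
  simpa only [pg.inv_inv] using D_cancel_right h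

lemma mul_cancel_right' {x y : P} (h : pg.D x (pg.inv y)) :
    pg.mul (pg.mul x (pg.inv y)) y = x := by
  simpa only [pg.inv_inv] using mul_cancel_right h

lemma D_cancel_left' {x y : P} (h : pg.D (pg.inv x) y) : pg.D x (pg.mul (pg.inv x) y) := by
  simpa only [pg.inv_inv] using D_cancel_left h

lemma mul_cancel_left' {x y : P} (h : pg.D (pg.inv x) y) :
    pg.mul x (pg.mul (pg.inv x) y) = y := by
  simpa only [pg.inv_inv] using mul_cancel_left h

/-! ### Moving a factor across a gap -/

lemma D_shift {a b s : P} (h1 : pg.D a s) (h2 : pg.D (pg.inv s) b) :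
    pg.D (pg.mul a s) (pg.mul (pg.inv s) b) ↔ pg.D a b := by
  rw [← pg.D_assoc _ _ _ (D_cancel_right h1) h2, mul_cancel_right h1]

/-- In a reduced word `x, y, c`, moving a `t` from `c` to `y` does not make `y` multipliable
with the preceding letter `x`. -/
lemma not_D_mul_right {x y c t : P} (hxy : ¬ pg.D x y) (hyc : ¬ pg.D y c)
    (hyt : pg.D y t) (htc : pg.D (pg.inv t) c) : ¬ pg.D x (pg.mul y t) := by
  intro h
  rcases pg.five _ _ _ _ h (D_cancel_right hyt) htc with h1 | h1
  · rw [pg.D_assoc _ _ _ h (D_cancel_right hyt), mul_cancel_right hyt] at h1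
    exact hxy h1
  · rw [mul_cancel_right hyt] at h1
    exact hyc h1

/-- Mirror image of `not_D_mul_right`. -/
lemma not_D_mul_left {x y c t : P} (hxy : ¬ pg.D x y) (hyc : ¬ pg.D y c)
    (hxt : pg.D x t) (hty : pg.D (pg.inv t) y) : ¬ pg.D (pg.mul (pg.inv t) y) c := by
  intro h
  rcases pg.five _ _ _ _ hxt (D_cancel_left' hty) h with h1 | h1
  · exact hxy ((D_shift hxt hty).1 h1)
  · rw [mul_cancel_left' hty] at h1
    exact hyc h1

/-- If `p` and `q` cannot be multiplied, but `p` can absorb both `s^σ` and `b` on the right and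
`q` can absorb `b^σ` on the left, then `s` and `b` can be multiplied. -/
lemma D_of_not_D {p q s b : P} (hpq : ¬ pg.D p q) (hps : pg.D p (pg.inv s))
    (hpb : pg.D p b) (hbq : pg.D (pg.inv b) q) : pg.D s b := by
  have h1 : pg.D s (pg.inv p) := by simpa only [pg.inv_inv] using pg.D_inv _ _ hps
  rcases pg.five _ _ _ _ (D_cancel_right' h1) hpb (D_cancel_left' hbq) with h2 | h2
  · rwa [mul_cancel_right' h1] at h2
  · exact absurd ((D_shift hpb hbq).1 h2) hpq

/-- Left and right multiplications of a letter `y` are compatible as soon as the right factor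
`s` can be moved to a next letter `c` not multipliable with `y`. -/
lemma D_mul_of_not_D {r y s c : P} (hyc : ¬ pg.D y c) (hry : pg.D r y) (hys : pg.D y s)
    (hsc : pg.D (pg.inv s) c) : pg.D (pg.mul r y) s := by
  rcases pg.five _ _ _ _ hry hys (D_cancel_left' hsc) with h | h
  · exact h
  · exact absurd ((D_shift hys hsc).1 h) hyc

/-! ### Interleaving of sequences -/

/-- `y i = [(s i)^σ · x i · s (i + 1)]`, all the products involved being defined. -/
def IsTwist (pg : Pregroup P) (x y s : ℕ → P) : Prop :=
  ∀ i, pg.D (pg.inv (s i)) (x i) ∧ pg.D (x i) (s (i + 1)) ∧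
    pg.D (pg.mul (pg.inv (s i)) (x i)) (s (i + 1)) ∧
    y i = pg.mul (pg.mul (pg.inv (s i)) (x i)) (s (i + 1))

lemma IsTwist.D_left {x y s : ℕ → P} (h : pg.IsTwist x y s) (i : ℕ) :
    pg.D (pg.inv (s i)) (pg.mul (x i) (s (i + 1))) := by
  obtain ⟨h1, h2, h3, -⟩ := h i
  exact (pg.D_assoc _ _ _ h1 h2).1 h3

lemma IsTwist.eq_left {x y s : ℕ → P} (h : pg.IsTwist x y s) (i : ℕ) :
    y i = pg.mul (pg.inv (s i)) (pg.mul (x i) (s (i + 1))) := by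
  obtain ⟨h1, h2, h3, h4⟩ := h i
  rw [h4, pg.mul_assoc _ _ _ h1 h2 h3]

/-- An interleave of a reduced sequence is reduced, at any gap at distance at least one from the
beginning of the sequence. -/
lemma not_D_of_twist {x y s : ℕ → P} (hx : ∀ i, ¬ pg.D (x i) (x (i + 1)))
    (h : pg.IsTwist x y s) (i : ℕ) : ¬ pg.D (y (i + 1)) (y (i + 2)) := by
  obtain ⟨-, w2, -, -⟩ := h i
  obtain ⟨-, a2, -, -⟩ := h (i + 1)
  obtain ⟨b1, b2, b3, b4⟩ := h (i + 2)
  obtain ⟨c1, -, -, -⟩ := h (i + 3)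
  -- first the middle gap, then the left one, then the right one
  have m1 := not_D_mul_right (hx i) (hx (i + 1)) a2 b1
  have m2 : ¬ pg.D (pg.mul (x (i + 1)) (s (i + 2))) (pg.mul (pg.inv (s (i + 2))) (x (i + 2))) :=
    fun hh => hx (i + 1) ((D_shift a2 b1).1 hh)
  have m3 := not_D_mul_left (hx (i + 1)) (hx (i + 2)) a2 b1
  have l2 := not_D_mul_left m1 m2 w2 (h.D_left (i + 1))
  rw [h.eq_left (i + 1), b4]
  exact not_D_mul_right l2 m3 b3 c1

lemma IsTwist.symm {x y s : ℕ → P} (h : pg.IsTwist x y s) :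
    pg.IsTwist y x (fun i => pg.inv (s i)) := by
  intro i
  obtain ⟨h1, h2, h3, h4⟩ := h i
  have e := h.eq_left i
  have d := h.D_left i
  have k : pg.mul (s i) (y i) = pg.mul (x i) (s (i + 1)) := by rw [e, mul_cancel_left' d]
  dsimp only
  rw [pg.inv_inv, k]
  refine ⟨?_, ?_, D_cancel_right h2, (mul_cancel_right h2).symm⟩
  · rw [e]; exact D_cancel_left' d
  · rw [h4]; exact D_cancel_right h3

lemma IsTwist.trans {x y z s t : ℕ → P} (hy : ∀ i, ¬ pg.D (y i) (y (i + 1)))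
    (h : pg.IsTwist x y s) (h' : pg.IsTwist y z t) (h0 : pg.D (s 0) (t 0)) :
    pg.IsTwist x z (fun i => pg.mul (s i) (t i)) := by
  have hs := h.symm
  have hD : ∀ i, pg.D (s i) (t i) := by
    rintro (_ | i)
    · exact h0
    · exact D_of_not_D (hy i) (hs i).2.1 (h' i).2.1 (h' (i + 1)).1
  intro i
  obtain ⟨a1, a2, -, -⟩ := h i
  obtain ⟨b1, b2, b3, b4⟩ := hs i
  obtain ⟨c1, c2, c3, c4⟩ := h' i
  have n1 := (hs (i + 1)).1
  have n2 := (h' (i + 1)).1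
  dsimp only at b1 b2 b3 b4 n1
  rw [pg.inv_inv] at b1 b3 b4
  -- `x s = r y` and `r⁻¹ x = y s⁻¹`, where `r = s i` and `s = s (i + 1)`
  have e1 : pg.mul (x i) (s (i + 1)) = pg.mul (s i) (y i) := by
    rw [h.eq_left i, mul_cancel_left' (h.D_left i)]
  have e2 : pg.mul (pg.inv (s i)) (x i) = pg.mul (y i) (pg.inv (s (i + 1))) := by
    rw [(h i).2.2.2, mul_cancel_right (h i).2.2.1]
  have d1 : pg.D (pg.mul (s i) (y i)) (t (i + 1)) := D_mul_of_not_D (hy i) b1 c2 n2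
  have d2 : pg.D (pg.mul (pg.inv (t i)) (y i)) (pg.inv (s (i + 1))) :=
    D_mul_of_not_D (hy i) c1 b2 n1
  have d3 : pg.D (pg.inv (t i)) (pg.mul (y i) (pg.inv (s (i + 1)))) :=
    (pg.D_assoc _ _ _ c1 b2).1 d2
  have d4 : pg.D (pg.mul (pg.inv (t i)) (pg.inv (s i))) (x i) := by
    rw [pg.D_assoc _ _ _ (pg.D_inv _ _ (hD i)) a1, e2]
    exact d3
  have e3 : pg.mul (pg.mul (pg.inv (t i)) (pg.inv (s i))) (x i) =
      pg.mul (pg.mul (pg.inv (t i)) (y i)) (pg.inv (s (i + 1))) := by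
    rw [pg.mul_assoc _ _ _ (pg.D_inv _ _ (hD i)) a1 d4, e2, pg.mul_assoc _ _ _ c1 b2 d2]
  have d5 : pg.D (pg.mul (pg.mul (pg.inv (t i)) (y i)) (pg.inv (s (i + 1))))
      (pg.mul (s (i + 1)) (t (i + 1))) := by
    rw [← pg.D_assoc _ _ _ (D_cancel_right' d2) (hD (i + 1)), mul_cancel_right' d2]
    exact c3
  dsimp only
  rw [pg.inv_mul_eq _ _ (hD i)]
  refine ⟨d4, ?_, ?_, ?_⟩
  · rw [← pg.D_assoc _ _ _ a2 (hD (i + 1)), e1]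
    exact d1
  · rw [e3]; exact d5
  · have d6 : pg.D (pg.mul (pg.mul (pg.mul (pg.inv (t i)) (y i)) (pg.inv (s (i + 1))))
        (s (i + 1))) (t (i + 1)) := by
      rw [mul_cancel_right' d2]; exact c3
    rw [c4, e3, ← pg.mul_assoc _ _ _ (D_cancel_right' d2) (hD (i + 1)) d6, mul_cancel_right' d2]

/-! ### Words as periodic sequences -/

/-- The periodic sequence whose period is the word `w`. -/
def cyc (pg : Pregroup P) (w : List P) (i : ℕ) : P :=
  pg.letter w (i % w.length)

lemma cyc_add_length (w : List P) (i : ℕ) : pg.cyc w (i + w.length) = pg.cyc w i := by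
  simp [cyc]

lemma cyc_of_lt {w : List P} {i : ℕ} (h : i < w.length) : pg.cyc w i = pg.letter w i := by
  rw [cyc, Nat.mod_eq_of_lt h]

lemma cycPReduced_iff {w : List P} (hw : 1 < w.length) :
    pg.CycPReduced w ↔ ∀ i, ¬ pg.D (pg.cyc w i) (pg.cyc w (i + 1)) := by
  constructor
  · rintro ⟨h1, h2⟩ i
    have hlt : i % w.length < w.length := Nat.mod_lt _ (by omega)
    rw [cyc, cyc, ← Nat.mod_add_mod]
    rcases Nat.lt_or_ge (i % w.length + 1) w.length with h | h
    · rw [Nat.mod_eq_of_lt h]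
      exact h1 _ h
    · have e : i % w.length = w.length - 1 := by omega
      have e' : w.length - 1 + 1 = w.length := by omega
      rw [e, e', Nat.mod_self]
      exact h2 hw
  · intro h
    refine ⟨fun i hi => ?_, fun _ => ?_⟩
    · rw [← cyc_of_lt hi, ← cyc_of_lt (w := w) (i := i) (by omega)]
      exact h i
    · have := h (w.length - 1)
      have e' : w.length - 1 + 1 = w.length := by omega
      rwa [cyc_of_lt (by omega), e', cyc, Nat.mod_self] at this

lemma cycInterleave_iff {v w : List P} (hv : 1 < v.length) :
    pg.CycInterleave v w ↔ w.length = v.length ∧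
      ∃ s : ℕ → P, (∀ i, s (i + v.length) = s i) ∧ pg.IsTwist (pg.cyc v) (pg.cyc w) s := by
  constructor
  · rintro ⟨hl, ⟨h, -⟩ | ⟨-, s, hs, h⟩⟩
    · omega
    refine ⟨hl, fun i => s (i % v.length), fun i => by simp, fun i => ?_⟩
    have hlt : i % v.length < v.length := Nat.mod_lt _ (by omega)
    have e : s ((i + 1) % v.length) = s (i % v.length + 1) := by
      rw [← Nat.mod_add_mod]
      rcases Nat.lt_or_ge (i % v.length + 1) v.length with h | h
      · rw [Nat.mod_eq_of_lt h]
      · have e : i % v.length + 1 = v.length := by omega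
        rw [e, Nat.mod_self, hs]
    dsimp only
    rw [e, cyc, cyc, hl]
    exact h _ hlt
  · rintro ⟨hl, s, hs, h⟩
    refine ⟨hl, Or.inr ⟨hv, s, by simpa using hs 0, fun i hi => ?_⟩⟩
    rw [← cyc_of_lt hi, ← cyc_of_lt (hl.symm ▸ hi)]
    exact h i

lemma cycInterleave_of_length_le {v w : List P} (hv : v.length ≤ 1) :
    pg.CycInterleave v w ↔ w = v := by
  constructor
  · rintro ⟨-, ⟨-, h⟩ | ⟨h, -⟩⟩
    · exact h
    · omega
  · rintro rfl
    exact ⟨rfl, Or.inl ⟨hv, rfl⟩⟩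

end Pregroup

/-- If `v ∈ X*` is cyclically `P`-reduced and `w ≈ᶜ v` then `w` is
cyclically `P`-reduced; furthermore `≈ᶜ` is an equivalence relation (reflexive,
symmetric and transitive) on the set of all cyclically `P`-reduced words over `X`. -/
theorem Pregroup.cycInterleave_equivalence {P : Type*} (pg : Pregroup P) :
    (∀ v w : List P, pg.InX v → pg.InX w → pg.CycPReduced v →
        pg.CycInterleave v w → pg.CycPReduced w) ∧
    (∀ v : List P, pg.InX v → pg.CycPReduced v → pg.CycInterleave v v) ∧
    (∀ v w : List P, pg.InX v → pg.InX w → pg.CycPReduced v → pg.CycPReduced w →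
        pg.CycInterleave v w → pg.CycInterleave w v) ∧
    (∀ u v w : List P, pg.InX u → pg.InX v → pg.InX w →
        pg.CycPReduced u → pg.CycPReduced v → pg.CycPReduced w →
        pg.CycInterleave u v → pg.CycInterleave v w → pg.CycInterleave u w) := by
  refine ⟨fun v w _ _ hv h => ?_, fun v _ _ => ?_, fun v w _ _ _ _ h => ?_,
    fun u v w _ _ _ _ hv _ h h' => ?_⟩
  · rcases Nat.lt_or_ge 1 v.length with hn | hn
    · obtain ⟨hl, s, -, hs⟩ := (cycInterleave_iff hn).1 h
      rw [cycPReduced_iff hn] at hv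
      rw [cycPReduced_iff (by omega)]
      intro i hi
      -- shift by one period, so that the gap has a predecessor
      refine not_D_of_twist hv hs (i + w.length - 1) ?_
      have e1 : i + w.length - 1 + 1 = i + w.length := by omega
      have e2 : i + w.length - 1 + 2 = i + 1 + w.length := by omega
      rw [e1, e2, cyc_add_length, cyc_add_length]
      exact hi
    · rw [cycInterleave_of_length_le hn] at h
      exact h ▸ hv
  · rcases Nat.lt_or_ge 1 v.length with hn | hn
    · rw [cycInterleave_iff hn]
      refine ⟨rfl, fun _ => pg.one, fun _ => rfl, fun i => ?_⟩
      simp only [inv_one, pg.one_mul, pg.mul_one, pg.D_one_left, pg.D_one_right, and_self]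
    · rw [cycInterleave_of_length_le hn]
  · rcases Nat.lt_or_ge 1 v.length with hn | hn
    · obtain ⟨hl, s, hp, hs⟩ := (cycInterleave_iff hn).1 h
      rw [cycInterleave_iff (by omega)]
      exact ⟨hl.symm, fun i => pg.inv (s i), fun i => by simp only [hl, hp], hs.symm⟩
    · rw [cycInterleave_of_length_le hn] at h
      subst h
      rw [cycInterleave_of_length_le hn]
  · rcases Nat.lt_or_ge 1 u.length with hn | hn
    · obtain ⟨hl, s, hp, hs⟩ := (cycInterleave_iff hn).1 h
      have hn' : 1 < v.length := by omega
      obtain ⟨hl', t, hq, ht⟩ := (cycInterleave_iff hn').1 h'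
      rw [cycPReduced_iff hn'] at hv
      rw [hl] at hq
      rw [cycInterleave_iff hn]
      refine ⟨hl'.trans hl, fun i => pg.mul (s i) (t i), fun i => by simp only [hp, hq],
        hs.trans hv ht ?_⟩
      -- by periodicity, the gap before the first letter is the one after the last letter
      have e : u.length - 1 + 1 = 0 + u.length := by omega
      have k := D_of_not_D (hv (u.length - 1)) (hs.symm (u.length - 1)).2.1
        (ht (u.length - 1)).2.1 (ht (u.length - 1 + 1)).1
      rwa [e, hp, hq] at k
    · rw [cycInterleave_of_length_le hn] at h
      subst h
      exact h'
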